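/- Suppose q^{2m} ≠ 1 for 1 ≤ m ≤ d−1 and a(q^k s) ≠ 0 for 0 ≤ k ≤ d−1. Then det C(α,β)(s) = 0 if and only if β = q^{d−1−2k} α for some integer k with 0 ≤ k ≤ d−1. -/

import Mathlib

/-- `qa qh s = s q^{-1/2} - s⁻¹ q^{1/2}` where `qh = q^{1/2}`. -/
noncomputable def qa (qh s : ℂ) : ℂ := s * qh⁻¹ - s⁻¹ * qh

/-- `L_{0,0}(s)`: diagonal with `(k,k)`-entry `a(q^k s)`. -/
noncomputable def L00 (q qh : ℂ) (d : ℕ) (s : ℂ) : Matrix (Fin d) (Fin d) ℂ :=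
  Matrix.diagonal fun k => qa qh (q ^ (k : ℕ) * s)

/-- `L_{1,1}(s)`: diagonal with `(k,k)`-entry `a(q^{d-1-k} s)`. -/
noncomputable def L11 (q qh : ℂ) (d : ℕ) (s : ℂ) : Matrix (Fin d) (Fin d) ℂ :=
  Matrix.diagonal fun k => qa qh (q ^ (d - 1 - (k : ℕ)) * s)

/-- `L_{1,0}`: `(k+1,k)`-entry `q^{k+1} - q^{-(k+1)}` for `0 ≤ k ≤ d-2`. -/
noncomputable def L10 (q : ℂ) (d : ℕ) : Matrix (Fin d) (Fin d) ℂ :=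
  Matrix.of fun i j =>
    if (i : ℕ) = (j : ℕ) + 1 then q ^ ((j : ℕ) + 1) - (q ^ ((j : ℕ) + 1))⁻¹ else 0

/-- `L_{0,1}`: `(d-k-2, d-k-1)`-entry `q^{k+1} - q^{-(k+1)}` for `0 ≤ k ≤ d-2`,
i.e. `(i, i+1)`-entry `q^{d-1-i} - q^{-(d-1-i)}`. -/
noncomputable def L01 (q : ℂ) (d : ℕ) : Matrix (Fin d) (Fin d) ℂ :=
  Matrix.of fun i j =>
    if (j : ℕ) = (i : ℕ) + 1 then q ^ (d - 1 - (i : ℕ)) - (q ^ (d - 1 - (i : ℕ)))⁻¹ else 0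

/-- `A(β)(s) = L_{0,0}(s) + β L_{0,1}`. -/
noncomputable def Amat (q qh : ℂ) (d : ℕ) (β s : ℂ) : Matrix (Fin d) (Fin d) ℂ :=
  L00 q qh d s + β • L01 q d

/-- `D(α)(s) = -α L_{0,1} + L_{1,1}(s)`. -/
noncomputable def Dmat (q qh : ℂ) (d : ℕ) (α s : ℂ) : Matrix (Fin d) (Fin d) ℂ :=
  (-α) • L01 q d + L11 q qh d s

/-- `C(α,β)(s) = -α L_{0,0}(s) + L_{1,0} - αβ L_{0,1} + β L_{1,1}(s)`. -/
noncomputable def Cmat (q qh : ℂ) (d : ℕ) (α β s : ℂ) : Matrix (Fin d) (Fin d) ℂ :=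
  (-α) • L00 q qh d s + L10 q d + (-(α * β)) • L01 q d + β • L11 q qh d s

open Polynomial in
/-- product polynomial -/
noncomputable def Fpoly (u v : ℕ → ℂ) (n m : ℕ) : ℂ[X] :=
  (∏ i ∈ Finset.range n, (1 - C (u i) * X)) * ∏ j ∈ Finset.range m, (1 - C (v j) * X)

open Polynomial in
theorem Fpoly_coeff_zero (u v : ℕ → ℂ) (n m : ℕ) : (Fpoly u v n m).coeff 0 = 1 := by
  rw [coeff_zero_eq_eval_zero, Fpoly]
  simp [eval_prod]

open Polynomial in
theorem Fpoly_natDegree (u v : ℕ → ℂ) (n m : ℕ) : (Fpoly u v n m).natDegree ≤ n + m := by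
  have key : ∀ (w : ℕ → ℂ) (n : ℕ),
      (∏ i ∈ Finset.range n, (1 - C (w i) * X : ℂ[X])).natDegree ≤ n := by
    intro w n
    refine (natDegree_prod_le _ _).trans ?_
    refine (Finset.sum_le_card_nsmul _ _ 1 ?_).trans (by simp)
    intro i _
    compute_degree
  exact natDegree_mul_le.trans (Nat.add_le_add (key u n) (key v m))

open Polynomial in
theorem span_lemma (u v : ℕ → ℂ) (N : ℕ) :
    ∀ (φ : ℂ[X] →ₗ[ℂ] ℂ), (∀ i j, i + j < N → u i ≠ v j) →
      (∀ n m, n + m = N → φ (Fpoly u v n m) = 0) → ∀ k ≤ N, φ (X ^ k) = 0 := by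
  induction N with
  | zero =>
    intro φ _ h k hk
    obtain rfl : k = 0 := by omega
    simpa [Fpoly] using h 0 0 rfl
  | succ N ih =>
    intro φ huv h
    have h1 : ∀ k ≤ N, φ (X * X ^ k) = 0 := by
      refine ih (φ ∘ₗ LinearMap.mulLeft ℂ X) (fun i j hij => huv i j (by omega)) ?_
      intro n m hnm
      have e : Fpoly u v n (m + 1) - Fpoly u v (n + 1) m
          = (u n - v m) • (X * Fpoly u v n m) := by
        simp only [Fpoly, Finset.prod_range_succ, smul_eq_C_mul, C_sub]
        ring
      have e2 := congrArg φ e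
      rw [map_sub, h n (m + 1) (by omega), h (n + 1) m (by omega), map_smul, smul_eq_mul,
        sub_zero] at e2
      have := sub_ne_zero.2 (huv n m (by omega))
      rcases mul_eq_zero.1 e2.symm with h' | h'
      · exact absurd h' this
      · simpa using h'
    intro k hk
    rcases k with _ | k
    · have h0 := h (N + 1) 0 rfl
      have hdeg := Fpoly_natDegree u v (N + 1) 0
      rw [(Fpoly u v (N + 1) 0).as_sum_range_C_mul_X_pow' (n := N + 2) (by omega),
        Finset.sum_range_succ', map_add, map_sum, Finset.sum_eq_zero, zero_add,
        Fpoly_coeff_zero] at h0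
      · simpa using h0
      · intro i hi
        rw [Finset.mem_range] at hi
        rw [← smul_eq_C_mul, map_smul, pow_succ', h1 i (by omega), smul_zero]
    · rw [pow_succ']
      exact h1 k (by omega)

open Polynomial in
/-- The `q`-difference operator times `X`. -/
noncomputable def Dop (q r t u α β : ℂ) (N : ℕ) (p : ℂ[X]) : ℂ[X] :=
  (1 - C (α * t) * X) * (1 - C (β * u * r ^ N) * X) * p.comp (C q * X)
    - (1 - C (α * u) * X) * (1 - C (β * t * q ^ N) * X) * p.comp (C r * X)

open Polynomial in
theorem Dop_Fpoly (q r t u α β : ℂ) (hqr : q * r = 1) (n m : ℕ) :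
    Dop q r t u α β (n + m) (Fpoly (fun i => α * t * q ^ (2 * i + 1))
      (fun j => α * u * r ^ (2 * j + 1)) n m)
    = C ((β - α * q ^ n * r ^ m) * (t * q ^ (n + m) - u * r ^ (n + m))) *
      (X * Fpoly (fun i => α * t * q ^ (2 * i)) (fun j => α * u * r ^ (2 * j)) n m) := by
  have a1 : ∀ (a x y : ℂ), x * y = 1 → ∀ n : ℕ,
      (1 - C a * X) * (∏ i ∈ Finset.range n, (1 - C (a * x ^ (2 * i + 1)) * X : ℂ[X])).comp (C x * X)
      = (∏ i ∈ Finset.range n, (1 - C (a * x ^ (2 * i)) * X)) * (1 - C (a * x ^ (2 * n)) * X) := by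
    intro a x y _ n
    rw [← Finset.prod_range_succ, Finset.prod_range_succ', prod_comp, mul_comm]
    congr 1
    · refine Finset.prod_congr rfl fun i _ => ?_
      simp only [C_mul, C_pow, sub_comp, one_comp, mul_comp, pow_comp, C_comp, X_comp]
      ring
    · simp
  have a2 : ∀ (a x y : ℂ), x * y = 1 → ∀ n : ℕ,
      (∏ i ∈ Finset.range n, (1 - C (a * x ^ (2 * i + 1)) * X : ℂ[X])).comp (C y * X)
      = (∏ i ∈ Finset.range n, (1 - C (a * x ^ (2 * i)) * X)) := by
    intro a x y h n
    rw [prod_comp]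
    refine Finset.prod_congr rfl fun i _ => ?_
    simp only [sub_comp, one_comp, mul_comp, C_comp, X_comp]
    rw [← mul_assoc, ← C_mul, pow_succ, show a * (x ^ (2 * i) * x) * y = a * x ^ (2 * i) * (x * y) by ring,
      h, mul_one]
  have hrq : r * q = 1 := by rw [mul_comm]; exact hqr
  have b1 := a1 (α * t) q r hqr n
  have b2 := a2 (α * t) q r hqr n
  have b3 := a1 (α * u) r q hrq m
  have b4 := a2 (α * u) r q hrq m
  simp only [Dop, Fpoly, mul_comp]
  rw [b2, b4]
  generalize (∏ i ∈ Finset.range n, (1 - C (α * t * q ^ (2 * i)) * X)) = P at *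
  generalize (∏ i ∈ Finset.range m, (1 - C (α * u * r ^ (2 * i)) * X)) = Q at *
  have hn : (C q * C r : ℂ[X]) ^ n = 1 := by rw [← C_mul, hqr]; simp
  have hm : (C q * C r : ℂ[X]) ^ m = 1 := by rw [← C_mul, hqr]; simp
  have key : (1 - C (α * t * q ^ (2 * n)) * X) * (1 - C (β * u * r ^ (n + m)) * X)
      - (1 - C (α * u * r ^ (2 * m)) * X) * (1 - C (β * t * q ^ (n + m)) * X)
      = C ((β - α * q ^ n * r ^ m) * (t * q ^ (n + m) - u * r ^ (n + m))) * X := by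
    simp only [C_mul, C_pow, C_sub]
    rw [mul_pow] at hn hm
    simp only [pow_add, pow_mul', pow_two]
    generalize (C q : ℂ[X]) ^ n = A at *
    generalize (C q : ℂ[X]) ^ m = B at *
    generalize (C r : ℂ[X]) ^ n = A' at *
    generalize (C r : ℂ[X]) ^ m = B' at *
    generalize (C α : ℂ[X]) = a at *
    generalize (C β : ℂ[X]) = b at *
    generalize (C t : ℂ[X]) = t at *
    generalize (C u : ℂ[X]) = u at *
    linear_combination (a*b*t*u*X^2*A*B' - a*u*B'*B'*X) * hn
      + (-(a*b*t*u*X^2*A*B') + a*t*A*A*X) * hm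
  linear_combination (1 - C (β * u * r ^ (n + m)) * X) * Q * b1
    - (1 - C (β * t * q ^ (n + m)) * X) * P * b3 + P * Q * key

open Polynomial in
theorem vecMul_Cmat (N : ℕ) (q qh : ℂ) (hq : qh ^ 2 = q) (hq0 : q ≠ 0) (α β s : ℂ) (hs : s ≠ 0)
    (p : ℂ[X]) (hp : p.natDegree ≤ N) (j : Fin (N + 1)) :
    Matrix.vecMul (fun i : Fin (N + 1) => p.coeff i) (Cmat q qh (N + 1) α β s) j
      = (Dop q q⁻¹ (s * qh⁻¹) (s⁻¹ * qh) α β N p).coeff (j + 1) := by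
  obtain ⟨j, hj⟩ := j
  have hqh : qh ≠ 0 := by rintro rfl; apply hq0; rw [← hq]; simp
  have hqa : ∀ k : ℕ, qa qh (q ^ k * s) = q ^ k * (s * qh⁻¹) - q⁻¹ ^ k * (s⁻¹ * qh) := by
    intro k
    simp only [qa, mul_inv, inv_pow]
    ring
  have L : Matrix.vecMul (fun i : Fin (N + 1) => p.coeff i) (Cmat q qh (N + 1) α β s) ⟨j, hj⟩
      = ∑ i ∈ Finset.range (N + 1),
        ((if i = j then p.coeff i * (-α * qa qh (q ^ i * s) + β * qa qh (q ^ (N - i) * s)) else 0)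
        + (if i = j + 1 then p.coeff i * (q ^ (j + 1) - q⁻¹ ^ (j + 1)) else 0)
        + (if j = i + 1 then p.coeff i * (-(α * β) * (q ^ (N - i) - q⁻¹ ^ (N - i))) else 0)) := by
    rw [Finset.sum_range, Matrix.vecMul, dotProduct]
    refine Finset.sum_congr rfl fun i _ => ?_
    obtain ⟨i, hi⟩ := i
    simp only [Cmat, L00, L01, L10, L11, Matrix.add_apply, Matrix.smul_apply, Matrix.of_apply,
      Matrix.diagonal_apply, Fin.mk.injEq, smul_eq_mul, Nat.add_sub_cancel, inv_pow]
    split_ifs <;> first | omega | ring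
  have hc : ∀ (x a b : ℂ), ((1 - C a * X) * (1 - C b * X) * p.comp (C x * X)).coeff (j + 1)
      = p.coeff (j + 1) * x ^ (j + 1) - (a + b) * (p.coeff j * x ^ j)
        + a * b * (if j = 0 then 0 else p.coeff (j - 1) * x ^ (j - 1)) := by
    intro x a b
    have : (1 - C a * X) * (1 - C b * X) * p.comp (C x * X)
      = p.comp (C x * X) - C (a + b) * (p.comp (C x * X) * X)
        + C (a * b) * (p.comp (C x * X) * X * X) := by
      simp only [C_add, C_mul]
      ring
    rw [this]
    simp only [coeff_add, coeff_sub, coeff_C_mul, coeff_mul_X, comp_C_mul_X_coeff]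
    rcases j with _ | j
    · simp
    · simp
  rw [L, Finset.sum_add_distrib, Finset.sum_add_distrib, Finset.sum_ite_eq', Finset.sum_ite_eq',
    if_pos (by simpa using hj), Dop, coeff_sub, hc, hc, hqa, hqa]
  have h2 : (if j + 1 ∈ Finset.range (N + 1) then
      p.coeff (j + 1) * (q ^ (j + 1) - q⁻¹ ^ (j + 1)) else 0)
      = p.coeff (j + 1) * (q ^ (j + 1) - q⁻¹ ^ (j + 1)) := by
    split_ifs with h
    · rfl
    · rw [coeff_eq_zero_of_natDegree_lt (by simp at h; omega), zero_mul]
  rw [h2]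
  have htu : (s * qh⁻¹) * (s⁻¹ * qh) = 1 := by field_simp
  generalize s * qh⁻¹ = t at *
  generalize s⁻¹ * qh = u at *
  have hqr : q * q⁻¹ = 1 := mul_inv_cancel₀ hq0
  generalize q⁻¹ = r at *
  obtain ⟨m, rfl⟩ : ∃ m, N = j + m := ⟨N - j, by omega⟩
  have hj1 : q ^ j * r ^ j = 1 := by rw [← mul_pow, hqr, one_pow]
  rcases j with _ | j
  · simp
    ring
  · have h3 : ∀ i, (j + 1 = i + 1) = (i = j) := by
      intro i; apply propext; omega
    simp only [h3, Finset.sum_ite_eq']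
    rw [if_pos (by simp; omega), show j + 1 + m - (j + 1) = m by omega,
      show j + 1 + m - j = m + 1 by omega]
    simp only [Nat.add_sub_cancel, Nat.succ_ne_zero, if_false]
    have hj2 : q ^ j * r ^ j = 1 := by rw [← mul_pow, hqr, one_pow]
    simp only [pow_add, pow_one] at *
    generalize q ^ j = A at *
    generalize r ^ j = A' at *
    generalize q ^ m = B at *
    generalize r ^ m = B' at *
    generalize p.coeff j = p0 at *
    generalize p.coeff (j+1) = p1 at *
    linear_combination (p1 * β * u * B' - p1 * β * t * B) * hj1
      + (-p0 * α * β * r * B' + p0 * α * β * q * B) * hj2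
      + p0 * α * β * (B * q - B' * r) * A * A' * htu

theorem det_Cmat_eq_zero_iff (d : ℕ) (hd : 2 ≤ d) (q qh : ℂ) (hq : qh ^ 2 = q) (hq0 : q ≠ 0)
    (hq2 : ∀ m : ℕ, 1 ≤ m → m ≤ d - 1 → q ^ (2 * m) ≠ 1)
    (α β : ℂ) (hα : α ≠ 0) (hβ : β ≠ 0) (s : ℂ) (hs : s ≠ 0)
    (ha : ∀ k : ℕ, k ≤ d - 1 → qa qh (q ^ k * s) ≠ 0) :
    (Cmat q qh d α β s).det = 0
      ↔ ∃ k : ℕ, k ≤ d - 1 ∧ β = q ^ ((d : ℤ) - 1 - 2 * (k : ℤ)) * α := by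
  obtain ⟨N, rfl⟩ : ∃ N, d = N + 1 := ⟨d - 1, by omega⟩
  simp only [Nat.add_sub_cancel] at *
  have hqh : qh ≠ 0 := by rintro rfl; apply hq0; rw [← hq]; simp
  have hqr : q * q⁻¹ = 1 := mul_inv_cancel₀ hq0
  have hqa : ∀ k : ℕ, qa qh (q ^ k * s) = (s * qh⁻¹) * q ^ k - (s⁻¹ * qh) * q⁻¹ ^ k := by
    intro k
    simp only [qa, mul_inv, inv_pow]
    ring
  have hV := vecMul_Cmat N q qh hq hq0 α β s hs
  have hpow : ∀ n m : ℕ, n + m = N →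
      q ^ (((N + 1 : ℕ) : ℤ) - 1 - 2 * (m : ℤ)) * α = α * q ^ n * q⁻¹ ^ m := by
    intro n m h
    rw [show ((N + 1 : ℕ) : ℤ) - 1 - 2 * (m : ℤ) = (n : ℤ) - m by push_cast; omega,
      zpow_sub₀ hq0, zpow_natCast, zpow_natCast, inv_pow]
    ring
  have key : ∀ n m : ℕ, n + m = N → ∃ p : Polynomial ℂ, p.coeff 0 = 1 ∧
      ∀ j : Fin (N + 1),
      Matrix.vecMul (fun i : Fin (N + 1) => p.coeff i) (Cmat q qh (N + 1) α β s) j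
      = (β - α * q ^ n * q⁻¹ ^ m) * qa qh (q ^ N * s) *
        (Fpoly (fun i => α * (s * qh⁻¹) * q ^ (2 * i))
          (fun j => α * (s⁻¹ * qh) * q⁻¹ ^ (2 * j)) n m).coeff j := by
    intro n m h
    subst h
    refine ⟨_, Fpoly_coeff_zero (fun i => α * (s * qh⁻¹) * q ^ (2 * i + 1))
      (fun j => α * (s⁻¹ * qh) * q⁻¹ ^ (2 * j + 1)) n m, fun j => ?_⟩
    rw [hV _ (Fpoly_natDegree _ _ _ _), Dop_Fpoly _ _ _ _ _ _ hqr, Polynomial.coeff_C_mul,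
      Polynomial.coeff_X_mul, hqa]
  constructor
  · intro hdet
    by_contra hno
    push Not at hno
    obtain ⟨v, hv0, hv⟩ := Matrix.exists_mulVec_eq_zero_iff.2 hdet
    apply hv0
    let φ : Polynomial ℂ →ₗ[ℂ] ℂ := ∑ i : Fin (N + 1), v i • Polynomial.lcoeff ℂ i
    have hφ : ∀ p, φ p = ∑ i : Fin (N + 1), v i * p.coeff i := by
      intro p
      simp [φ]
    have hX := span_lemma (fun i => α * (s * qh⁻¹) * q ^ (2 * i))
      (fun j => α * (s⁻¹ * qh) * q⁻¹ ^ (2 * j)) N φ ?_ ?_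
    · funext i
      have := hX i (by omega)
      rw [hφ, Finset.sum_eq_single i] at this
      · simpa using this
      · intro b _ hb
        rw [Polynomial.coeff_X_pow, if_neg (by omega), mul_zero]
      · simp
    · intro i j hij heq
      apply ha (i + j) (by omega)
      rw [hqa]
      have hi : q⁻¹ ^ i * q ^ i = 1 := by rw [← mul_pow, mul_comm, hqr, one_pow]
      have hj : q⁻¹ ^ j * q ^ j = 1 := by rw [← mul_pow, mul_comm, hqr, one_pow]
      have heq' : (s * qh⁻¹) * q ^ (2 * i) = (s⁻¹ * qh) * q⁻¹ ^ (2 * j) := by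
        apply mul_left_cancel₀ hα
        linear_combination heq
      simp only [pow_add, pow_mul', pow_two] at *
      generalize q⁻¹ ^ i = A' at *
      generalize q⁻¹ ^ j = B' at *
      linear_combination (A' * q ^ j) * heq' - (s * qh⁻¹) * q ^ i * q ^ j * hi
        + (s⁻¹ * qh) * A' * B' * hj
    · intro n m h
      obtain ⟨p, -, hp⟩ := key n m h
      have h1 : Matrix.vecMul (fun i : Fin (N + 1) => p.coeff i) (Cmat q qh (N + 1) α β s) ⬝ᵥ v
          = 0 := by
        rw [← Matrix.dotProduct_mulVec, hv, dotProduct_zero]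
      have h2 : (β - α * q ^ n * q⁻¹ ^ m) * qa qh (q ^ N * s) * φ (Fpoly
          (fun i => α * (s * qh⁻¹) * q ^ (2 * i))
          (fun j => α * (s⁻¹ * qh) * q⁻¹ ^ (2 * j)) n m) = 0 := by
        rw [← h1, hφ, dotProduct, Finset.mul_sum]
        refine Finset.sum_congr rfl fun j _ => ?_
        rw [hp]
        ring
      refine (mul_eq_zero.1 h2).resolve_left (mul_ne_zero ?_ (ha N le_rfl))
      rw [← hpow n m h]
      exact sub_ne_zero.2 (hno m (by omega))
  · rintro ⟨k, hk, hb⟩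
    obtain ⟨p, hp0, hp⟩ := key (N - k) k (by omega)
    refine Matrix.exists_vecMul_eq_zero_iff.1 ⟨_, ?_, funext fun j => (hp j).trans ?_⟩
    · intro h
      have := congrFun h 0
      simp [hp0] at this
    · rw [← hpow (N - k) k (by omega), ← hb]
      simp
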